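/- Fix λ > 0, set p_n = λ/n, and fix a > 0, C > 0. Let (k_n), (w_n) be sequences of positive reals with lim_{n→∞} (log n)/(w_n² k_n^{1/3}) = 0, and set t_n := w_n² k_n^{1/3}/(C a log(1/p_n)). Then there exist a constant C' > 0 and n₀ such that for all n ≥ n₀ and all integers m ≥ 1, the number of subgraphs of K_n that are m-cores (with parameters a, w_n, C, k_n) is at most (1/p_n)^{m·Ψ_n}, where Ψ_n := (1/log(1/p_n)) · [ (C'/t_n) log n + log(C' m/t_n²) ]. -/

import Mathlib

open scoped BigOperators Classical
open Finset Filter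

noncomputable section

/-- Number of edges of a finite simple graph. -/
def edgeCount {V : Type*} [Fintype V] (G : SimpleGraph V) : ℕ :=
  (Finset.univ.filter (fun e : Sym2 V => e ∈ G.edgeSet)).card

/-- Number of triangles (3-cliques) of a finite simple graph. -/
def triangleCount {V : Type*} [Fintype V] (G : SimpleGraph V) : ℕ :=
  (Finset.univ.filter (fun s : Finset V => G.IsNClique 3 s)).card

/-- Number of vertices lying in at least one triangle. -/
def vT {V : Type*} [Fintype V] (G : SimpleGraph V) : ℕ :=
  (Finset.univ.filter (fun v : V => ∃ u w : V, G.Adj v u ∧ G.Adj v w ∧ G.Adj u w)).card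

/-- Degree of a vertex. -/
def deg {V : Type*} [Fintype V] (G : SimpleGraph V) (v : V) : ℕ :=
  (Finset.univ.filter (fun u => G.Adj v u)).card

/-- Probability that the Erdős–Rényi random graph `G_{n,p}` equals the graph `G`. -/
def graphProb (n : ℕ) (p : ℝ) (G : SimpleGraph (Fin n)) : ℝ :=
  p ^ edgeCount G * (1 - p) ^ (n.choose 2 - edgeCount G)

/-- Probability of an event under the Erdős–Rényi measure. -/
def prob (n : ℕ) (p : ℝ) (A : Set (SimpleGraph (Fin n))) : ℝ :=
  ∑ G : SimpleGraph (Fin n), if G ∈ A then graphProb n p G else 0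

/-- Conditional probability `P(A | B)` (with the convention `0` when `P(B) = 0`). -/
def condProb (n : ℕ) (p : ℝ) (A B : Set (SimpleGraph (Fin n))) : ℝ :=
  prob n p (A ∩ B) / prob n p B

/-- Conditional expectation `E_G[f]` given that every edge of `G` is present. -/
def condExpect (n : ℕ) (p : ℝ) (G : SimpleGraph (Fin n)) (f : SimpleGraph (Fin n) → ℝ) : ℝ :=
  (∑ H : SimpleGraph (Fin n), if G ≤ H then graphProb n p H * f H else 0) /
    prob n p {H | G ≤ H}

/-- `E_G(T)`: conditional expectation of the number of triangles. -/
def condTri (n : ℕ) (p : ℝ) (G : SimpleGraph (Fin n)) : ℝ :=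
  condExpect n p G (fun H => (triangleCount H : ℝ))

/-- The variational quantity `Φ_{n,p,k}(a)`. -/
def Phi (n : ℕ) (p k a : ℝ) : ℝ :=
  sInf {x : ℝ | ∃ G : SimpleGraph (Fin n),
    a * k ≤ condTri n p G ∧ x = (edgeCount G : ℝ) * Real.log (1 / p)}

/-- A seed, with parameters `a, w, C, k` and edge probability `p`. -/
def IsSeed (n : ℕ) (p a w C k : ℝ) (G : SimpleGraph (Fin n)) : Prop :=
  (a - w) * k ≤ condTri n p G ∧
  (edgeCount G : ℝ) ≤ C * a * w⁻¹ * k ^ ((2 : ℝ) / 3) * Real.log (1 / p)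

/-- A core, with parameters `a, w, C, k` and edge probability `p`. -/
def IsCore (n : ℕ) (p a w C k : ℝ) (G : SimpleGraph (Fin n)) : Prop :=
  (a - 2 * w) * k ≤ condTri n p G ∧
  (edgeCount G : ℝ) ≤ C * a * w⁻¹ * k ^ ((2 : ℝ) / 3) * Real.log (1 / p) ∧
  ∀ e ∈ G.edgeSet,
    w ^ 2 * k ^ ((1 : ℝ) / 3) / (C * a * Real.log (1 / p)) ≤
      condTri n p G - condTri n p (G.deleteEdges {e})

/-- A `q`-basic graph. -/
def qBasic {V : Type*} [Fintype V] (q : ℕ) (G : SimpleGraph V) : Prop :=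
  vT G = q ∧ ∀ e ∈ G.edgeSet, vT (G.deleteEdges {e}) < q

/-- Containment of a `(δ, m)`-near-clique. -/
def containsNearClique {n : ℕ} (H : SimpleGraph (Fin n)) (δ m : ℝ) : Prop :=
  ∃ H' : SimpleGraph (Fin n), H' ≤ H ∧ 0 < edgeCount H' ∧
    ∀ v : Fin n, (∃ u, H'.Adj v u) →
      (1 - 4 * δ ^ ((1 : ℝ) / 2)) * (2 * m) ^ ((1 : ℝ) / 2) ≤ (deg H' v : ℝ)

/-- Partition function of the exponential random graph model tilted by `exp(b · V_T)`. -/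
def ergmZ (n : ℕ) (p b : ℝ) : ℝ :=
  ∑ G : SimpleGraph (Fin n), graphProb n p G * Real.exp (b * vT G)

/-- Probability of an event under the exponential random graph measure. -/
def ergmProb (n : ℕ) (p b : ℝ) (A : Set (SimpleGraph (Fin n))) : ℝ :=
  (∑ G : SimpleGraph (Fin n),
    if G ∈ A then graphProb n p G * Real.exp (b * vT G) else 0) / ergmZ n p b

/-!
Write `p = λ / n`. By linearity `E_G(T)` is the sum over all vertex triples of `p` to the number of
pairs in the triple missing from `G`. Removing an edge `uv` only affects the triples `{u, v, x}`,
whose terms are at most `1` when `x` is adjacent to `u` and at most `p` otherwise, so that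
`E_G(T) - E_{G∖uv}(T) ≤ deg u + n p`. Under (C3) every non-isolated vertex of a core therefore has
degree at least `t_n - λ`, which is at least `t_n / 2` for large `n` because `t_n → ∞`. Hence an
`m`-core has at most `4 m / t_n` non-isolated vertices, and `m`-cores are counted by choosing these
vertices and then `m` of the at most `(4 m / t_n)²` pairs among them, using
`N.choose m ≤ (e N / m) ^ m`.
-/

section EdgeCount

variable {V : Type*} [Fintype V]

lemma edgeCount_eq_card_edgeFinset (G : SimpleGraph V) [Fintype G.edgeSet] :
    edgeCount G = #G.edgeFinset := by
  rw [edgeCount]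
  congr 1
  ext e
  simp

lemma edgeCount_sup (G K : SimpleGraph V) :
    edgeCount (G ⊔ K) = edgeCount G + edgeCount (K \ G) := by
  simp only [edgeCount_eq_card_edgeFinset, SimpleGraph.edgeFinset_sup,
    SimpleGraph.edgeFinset_sdiff]
  rw [add_comm, card_sdiff_add_card, union_comm]

lemma edgeCount_pos_of_adj {G : SimpleGraph V} {v w : V} (h : G.Adj v w) : 0 < edgeCount G := by
  rw [edgeCount_eq_card_edgeFinset, card_pos]
  exact ⟨s(v, w), by simpa using h⟩

lemma card_filter_le_and_edgeCount_eq_le [DecidableEq V] (K : SimpleGraph V) (m : ℕ) :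
    #{G | G ≤ K ∧ edgeCount G = m} ≤ (edgeCount K).choose m := by
  rw [edgeCount_eq_card_edgeFinset K, ← card_powersetCard]
  refine card_le_card_of_injOn (fun G ↦ G.edgeFinset) (fun G hG ↦ ?_)
    (fun G _ H _ h ↦ SimpleGraph.edgeFinset_inj.1 h)
  obtain ⟨hGK, hm⟩ := (mem_filter.1 hG).2
  exact mem_powersetCard.2
    ⟨SimpleGraph.edgeFinset_mono hGK, by rw [← edgeCount_eq_card_edgeFinset, hm]⟩

lemma sum_Icc_pow_card_mul_pow_card_sub {α R : Type*} [DecidableEq α] [CommSemiring R]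
    {s t : Finset α} (hst : s ⊆ t) (a b : R) :
    ∑ u ∈ Icc s t, a ^ #u * b ^ (#t - #u) = a ^ #s * (a + b) ^ (#t - #s) := by
  have hdisj : ∀ u ∈ (t \ s).powerset, Disjoint s u := fun u hu ↦
    disjoint_sdiff.mono_right (mem_powerset.1 hu)
  rw [Icc_eq_image_powerset hst, sum_image fun u hu v hv h ↦ ?_, ← card_sdiff_of_subset hst,
    ← sum_pow_mul_eq_add_pow, mul_sum]
  · refine sum_congr rfl fun u hu ↦ ?_
    rw [card_union_of_disjoint (hdisj u hu), card_sdiff_of_subset hst, pow_add, mul_assoc,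
      Nat.sub_sub]
  · rw [← union_sdiff_cancel_left (hdisj u hu), h, union_sdiff_cancel_left (hdisj v hv)]

lemma sum_supergraphs_pow_edgeCount [DecidableEq V] {R : Type*} [CommSemiring R]
    (G : SimpleGraph V) (a b : R) :
    ∑ H with G ≤ H, a ^ edgeCount H * b ^ ((Fintype.card V).choose 2 - edgeCount H) =
      a ^ edgeCount G * (a + b) ^ ((Fintype.card V).choose 2 - edgeCount G) := by
  simp only [edgeCount_eq_card_edgeFinset, ← SimpleGraph.card_edgeFinset_top_eq_card_choose_two]
  rw [← sum_Icc_pow_card_mul_pow_card_sub (SimpleGraph.edgeFinset_mono le_top)]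
  refine sum_bij (fun H _ ↦ H.edgeFinset) (fun H hH ↦ ?_)
    (fun H _ H' _ h ↦ SimpleGraph.edgeFinset_inj.1 h) (fun E hE ↦ ?_) (fun _ _ ↦ rfl)
  · exact mem_Icc.2 ⟨SimpleGraph.edgeFinset_mono (mem_filter.1 hH).2,
      SimpleGraph.edgeFinset_mono le_top⟩
  · obtain ⟨hGE, hE⟩ := mem_Icc.1 hE
    have hfrom : (SimpleGraph.fromEdgeSet (E : Set (Sym2 V))).edgeSet = E := by
      rw [SimpleGraph.edgeSet_fromEdgeSet, sdiff_eq_left, Set.disjoint_right]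
      intro e hdiag he
      simpa [hdiag] using hE he
    refine ⟨.fromEdgeSet E, mem_filter.2 ⟨mem_univ _, ?_⟩, ?_⟩
    · rwa [← SimpleGraph.edgeSet_subset_edgeSet, hfrom, ← SimpleGraph.coe_edgeFinset, coe_subset]
    · rw [← coe_inj, SimpleGraph.coe_edgeFinset, hfrom]

end EdgeCount

section CliqueOn

variable {V : Type*} {G : SimpleGraph V} {s : Finset V}

/-- The complete graph on the vertex set `s`, as a graph on `V` in which the vertices outside `s`
are isolated. -/
def cliqueOn (s : Finset V) : SimpleGraph V := SimpleGraph.fromEdgeSet (s : Set V).sym2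

@[simp]
lemma cliqueOn_adj {v w : V} : (cliqueOn s).Adj v w ↔ (v ∈ s ∧ w ∈ s) ∧ v ≠ w := by
  simp [cliqueOn]

lemma le_cliqueOn_iff_support_subset : G ≤ cliqueOn s ↔ G.support ⊆ s := by
  simp [cliqueOn]

lemma cliqueOn_le_iff_isClique : cliqueOn s ≤ G ↔ G.IsClique s :=
  ⟨fun h _ hv _ hw hvw ↦ h (cliqueOn_adj.2 ⟨⟨hv, hw⟩, hvw⟩),
    fun h _ _ hvw ↦ h (cliqueOn_adj.1 hvw).1.1 (cliqueOn_adj.1 hvw).1.2 (cliqueOn_adj.1 hvw).2⟩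

lemma edgeCount_cliqueOn [Fintype V] (s : Finset V) : edgeCount (cliqueOn s) = (#s).choose 2 := by
  rw [← Sym2.card_image_offDiag, edgeCount]
  congr 1
  ext e
  cases e with | _ v w
  simp only [mem_filter, mem_univ, true_and, SimpleGraph.mem_edgeSet, cliqueOn_adj, mem_image,
    mem_offDiag, Prod.exists, Function.uncurry_apply_pair, Sym2.eq_iff]
  grind

end CliqueOn

section TriangleExpectation

variable {n : ℕ} {p : ℝ}

lemma prob_supergraphs (n : ℕ) (p : ℝ) (G : SimpleGraph (Fin n)) :
    prob n p {H | G ≤ H} = p ^ edgeCount G := by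
  simpa [prob, graphProb, sum_filter] using sum_supergraphs_pow_edgeCount G p (1 - p)

lemma condProb_supergraphs (hp : p ≠ 0) (G K : SimpleGraph (Fin n)) :
    condProb n p {H | K ≤ H} {H | G ≤ H} = p ^ edgeCount (K \ G) := by
  have hinter : {H | K ≤ H} ∩ {H | G ≤ H} = {H | G ⊔ K ≤ H} := by
    ext H
    simp [and_comm]
  rw [condProb, hinter, prob_supergraphs, prob_supergraphs, edgeCount_sup, pow_add,
    mul_div_cancel_left₀ _ (pow_ne_zero _ hp)]

lemma condExpect_sum {ι : Type*} (s : Finset ι) (n : ℕ) (p : ℝ) (G : SimpleGraph (Fin n))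
    (f : ι → SimpleGraph (Fin n) → ℝ) :
    condExpect n p G (fun H ↦ ∑ i ∈ s, f i H) = ∑ i ∈ s, condExpect n p G (f i) := by
  simp only [condExpect, ← sum_div, ← sum_filter, mul_sum]
  rw [sum_comm]

lemma condExpect_indicator (n : ℕ) (p : ℝ) (G : SimpleGraph (Fin n))
    (A : Set (SimpleGraph (Fin n))) :
    condExpect n p G (fun H ↦ if H ∈ A then 1 else 0) = condProb n p A {H | G ≤ H} := by
  rw [condExpect, condProb, prob]
  congr 1
  refine sum_congr rfl fun H _ ↦ ?_
  by_cases hG : G ≤ H <;> by_cases hA : H ∈ A <;> simp [hG, hA]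

lemma triangleCount_eq_sum {V : Type*} [Fintype V] (H : SimpleGraph V) :
    (triangleCount H : ℝ) =
      ∑ s ∈ powersetCard 3 univ, if H ∈ {H | cliqueOn s ≤ H} then (1 : ℝ) else 0 := by
  rw [sum_boole, triangleCount]
  congr 2
  ext s
  simp [SimpleGraph.isNClique_iff, cliqueOn_le_iff_isClique, and_comm]

lemma condTri_eq_sum (hp : p ≠ 0) (G : SimpleGraph (Fin n)) :
    condTri n p G = ∑ s ∈ powersetCard 3 univ, p ^ edgeCount (cliqueOn s \ G) := by
  simp only [condTri, triangleCount_eq_sum, condExpect_sum, condExpect_indicator,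
    condProb_supergraphs hp]

lemma sdiff_deleteEdges_of_notMem {V : Type*} {G K : SimpleGraph V} {e : Sym2 V}
    (he : e ∉ K.edgeSet) : K \ G.deleteEdges {e} = K \ G := by
  rw [← SimpleGraph.edgeSet_inj]
  ext f
  simp only [SimpleGraph.edgeSet_sdiff, SimpleGraph.edgeSet_deleteEdges, Set.mem_sdiff,
    Set.mem_singleton_iff]
  grind

lemma sum_powersetCard_filter_subset {α M : Type*} [Fintype α] [DecidableEq α] [AddCommMonoid M]
    (t : Finset α) (f : Finset α → M) :
    ∑ s ∈ powersetCard (#t + 1) univ with t ⊆ s, f s = ∑ x ∈ tᶜ, f (insert x t) := by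
  rw [← sum_image (g := (insert · t))]
  · refine sum_congr (ext fun s ↦ ?_) fun _ _ ↦ rfl
    simp only [mem_filter, mem_powersetCard_univ, mem_image, mem_compl, exists_eq_insert_iff]
    grind
  · intro x hx y _ h
    exact (insert_inj (by simpa using hx)).1 h

lemma pow_edgeCount_cliqueOn_sdiff_le (hp : 0 ≤ p) (hp1 : p ≤ 1) {V : Type*} [Fintype V]
    (G : SimpleGraph V) {s : Finset V} {u x : V} (hu : u ∈ s) (hx : x ∈ s) (hux : u ≠ x) :
    p ^ edgeCount (cliqueOn s \ G) ≤ (if G.Adj u x then 1 else 0) + p := by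
  split_ifs with hadj
  · linarith [pow_le_one₀ (n := edgeCount (cliqueOn s \ G)) hp hp1]
  · have hmissing : (cliqueOn s \ G).Adj u x := by simp [hu, hx, hux, hadj]
    rw [zero_add]
    exact pow_le_of_le_one hp hp1 (edgeCount_pos_of_adj hmissing).ne'

theorem condTri_sub_condTri_deleteEdges_le (hp : 0 < p) (hp1 : p ≤ 1) (G : SimpleGraph (Fin n))
    {u v : Fin n} (huv : u ≠ v) :
    condTri n p G - condTri n p (G.deleteEdges {s(u, v)}) ≤ deg G u + n * p := by
  have hzero : ∀ s ∈ powersetCard 3 univ, ¬ {u, v} ⊆ s →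
      p ^ edgeCount (cliqueOn s \ G) -
        p ^ edgeCount (cliqueOn s \ G.deleteEdges {s(u, v)}) = 0 := by
    intro s _ hs
    rw [sdiff_deleteEdges_of_notMem, sub_self]
    simpa [huv, insert_subset_iff] using hs
  calc condTri n p G - condTri n p (G.deleteEdges {s(u, v)})
      = ∑ s ∈ powersetCard (#{u, v} + 1) univ with {u, v} ⊆ s,
          (p ^ edgeCount (cliqueOn s \ G) -
            p ^ edgeCount (cliqueOn s \ G.deleteEdges {s(u, v)})) := by
        rw [condTri_eq_sum hp.ne', condTri_eq_sum hp.ne', ← sum_sub_distrib, card_pair huv]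
        exact (sum_filter_of_ne fun s hs hne ↦ not_imp_comm.1 (hzero s hs) hne).symm
    _ ≤ ∑ s ∈ powersetCard (#{u, v} + 1) univ with {u, v} ⊆ s,
          p ^ edgeCount (cliqueOn s \ G) :=
        sum_le_sum fun s _ ↦ sub_le_self _ (pow_nonneg hp.le _)
    _ = ∑ x ∈ {u, v}ᶜ, p ^ edgeCount (cliqueOn (insert x {u, v}) \ G) :=
        sum_powersetCard_filter_subset _ _
    _ ≤ ∑ x ∈ {u, v}ᶜ, ((if G.Adj u x then 1 else 0) + p) := by
        refine sum_le_sum fun x hx ↦ pow_edgeCount_cliqueOn_sdiff_le hp.le hp1 G ?_ ?_ ?_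
        · simp
        · simp
        · rintro rfl
          simp at hx
    _ ≤ ∑ x, ((if G.Adj u x then 1 else 0) + p) :=
        sum_le_univ_sum_of_nonneg fun x ↦ by positivity
    _ = deg G u + n * p := by
        simp [sum_add_distrib, deg]

end TriangleExpectation

section LargeDegrees

variable {V : Type*} [Fintype V] {d : ℝ}

lemma support_ncard_mul_le {G : SimpleGraph V} (hd : ∀ v ∈ G.support, d ≤ deg G v) :
    G.support.ncard * d ≤ 2 * edgeCount G := by
  have hdeg : ∀ v, deg G v = G.degree v := fun v ↦ by
    rw [deg, ← SimpleGraph.card_neighborFinset_eq_degree]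
    congr 1
    ext w
    simp
  rw [Set.ncard_eq_toFinset_card', ← nsmul_eq_mul, edgeCount_eq_card_edgeFinset]
  calc #G.support.toFinset • d ≤ ∑ v ∈ G.support, (G.degree v : ℝ) :=
        card_nsmul_le_sum _ _ _ fun v hv ↦ hdeg v ▸ hd v (Set.mem_toFinset.1 hv)
    _ = 2 * #G.edgeFinset := mod_cast G.sum_degrees_support_eq_twice_card_edges

lemma card_filter_support_ncard_le_and_edgeCount_eq_le [DecidableEq V] {r : ℕ}
    (hr : r ≤ Fintype.card V) (m : ℕ) :
    #{G : SimpleGraph V | G.support.ncard ≤ r ∧ edgeCount G = m} ≤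
      (Fintype.card V).choose r * (r.choose 2).choose m := by
  have hcover : ({G | G.support.ncard ≤ r ∧ edgeCount G = m} : Finset (SimpleGraph V)) ⊆
      (powersetCard r univ).biUnion fun s ↦ {G | G ≤ cliqueOn s ∧ edgeCount G = m} := by
    intro G hG
    obtain ⟨hsupp, hm⟩ := (mem_filter.1 hG).2
    rw [Set.ncard_eq_toFinset_card'] at hsupp
    obtain ⟨s, hs, rfl⟩ := exists_superset_card_eq hsupp hr
    refine mem_biUnion.2 ⟨s, mem_powersetCard_univ.2 rfl, mem_filter.2 ⟨mem_univ _, ?_, hm⟩⟩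
    rwa [le_cliqueOn_iff_support_subset, ← Set.toFinset_subset]
  calc _ ≤ _ := card_le_card hcover
    _ ≤ #(powersetCard r (univ : Finset V)) * (r.choose 2).choose m := by
        refine card_biUnion_le_card_mul _ _ _ fun s hs ↦ ?_
        rw [← mem_powersetCard_univ.1 hs, ← edgeCount_cliqueOn]
        exact card_filter_le_and_edgeCount_eq_le _ _
    _ = (Fintype.card V).choose r * (r.choose 2).choose m := by
        rw [card_powersetCard, card_univ]

lemma choose_le_exp_one_mul_div_pow (N m : ℕ) :
    (N.choose m : ℝ) ≤ (Real.exp 1 * N / m) ^ m := by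
  rcases m.eq_zero_or_pos with rfl | hm
  · simp
  calc (N.choose m : ℝ) ≤ N ^ m / m.factorial := Nat.choose_le_pow_div m N
    _ = (N / m) ^ m * (m ^ m / m.factorial) := by
        rw [div_pow]
        field_simp
    _ ≤ (N / m) ^ m * Real.exp m := by
        gcongr
        exact Real.pow_div_factorial_le_exp m m.cast_nonneg m
    _ = (Real.exp 1 * N / m) ^ m := by
        rw [← Real.exp_one_pow, ← mul_pow]
        ring

lemma choose_mul_choose_choose_two_le_exp {N m r : ℕ} {x : ℝ} (hN : N ≠ 0) (hm : 0 < m)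
    (hx : 0 < x) (hr : r ≤ m * x) :
    (N.choose r * (r.choose 2).choose m : ℝ) ≤
      Real.exp (m * (x * Real.log N + Real.log (Real.exp 1 * m * x ^ 2))) := by
  have hsupport : (N.choose r : ℝ) ≤ Real.exp (m * x * Real.log N) := by
    calc (N.choose r : ℝ) ≤ N ^ r := mod_cast N.choose_le_pow r
      _ = Real.exp (r * Real.log N) := by
          rw [Real.exp_nat_mul, Real.exp_log (by positivity)]
      _ ≤ Real.exp (m * x * Real.log N) := by gcongr
  have hedges : ((r.choose 2).choose m : ℝ) ≤
      Real.exp (m * Real.log (Real.exp 1 * m * x ^ 2)) := by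
    calc ((r.choose 2).choose m : ℝ) ≤ (Real.exp 1 * (r.choose 2 : ℕ) / m) ^ m :=
          choose_le_exp_one_mul_div_pow _ m
      _ ≤ (Real.exp 1 * (m * x) ^ 2 / m) ^ m := by
          gcongr
          calc ((r.choose 2 : ℕ) : ℝ) ≤ r ^ 2 := mod_cast r.choose_le_pow 2
            _ ≤ (m * x) ^ 2 := by gcongr
      _ = (Real.exp 1 * m * x ^ 2) ^ m := by
          congr 1
          field_simp
      _ = Real.exp (m * Real.log (Real.exp 1 * m * x ^ 2)) := by
          rw [Real.exp_nat_mul, Real.exp_log (by positivity)]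
  rw [mul_add, ← mul_assoc, Real.exp_add]
  gcongr

theorem card_filter_le_deg_and_edgeCount_eq_le_exp [DecidableEq V] [Nonempty V] {m : ℕ}
    (hm : 0 < m) (hd : 0 < d) :
    (#{G : SimpleGraph V | (∀ v ∈ G.support, d ≤ deg G v) ∧ edgeCount G = m} : ℝ) ≤
      Real.exp (m * (2 / d * Real.log (Fintype.card V) +
        Real.log (Real.exp 1 * m * (2 / d) ^ 2))) := by
  set r := min (Fintype.card V) ⌊m * (2 / d)⌋₊
  have hsupport {G : SimpleGraph V} (hdeg : ∀ v ∈ G.support, d ≤ deg G v)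
      (hG : edgeCount G = m) : G.support.ncard ≤ r := by
    refine le_min ?_ (Nat.le_floor ?_)
    · rw [Set.ncard_eq_toFinset_card']
      exact card_le_univ _
    · rw [← hG, mul_div_assoc', le_div_iff₀ hd, mul_comm _ 2]
      exact support_ncard_mul_le hdeg
  calc _ ≤ (#{G : SimpleGraph V | G.support.ncard ≤ r ∧ edgeCount G = m} : ℝ) :=
        Nat.cast_le.2 <| card_le_card <| monotone_filter_right univ fun _ _ hG ↦
          ⟨hsupport hG.1 hG.2, hG.2⟩
    _ ≤ (Fintype.card V).choose r * (r.choose 2).choose m :=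
        mod_cast card_filter_support_ncard_le_and_edgeCount_eq_le (min_le_left _ _) m
    _ ≤ _ :=
        choose_mul_choose_choose_two_le_exp Fintype.card_ne_zero hm (by positivity)
          ((Nat.cast_le.2 (min_le_right _ _)).trans (Nat.floor_le (by positivity)))

end LargeDegrees

section CoreCounting

lemma sub_le_deg_of_le_condTri_sub {n : ℕ} {p t : ℝ} (hp : 0 < p) (hp1 : p ≤ 1)
    {G : SimpleGraph (Fin n)}
    (hG : ∀ e ∈ G.edgeSet, t ≤ condTri n p G - condTri n p (G.deleteEdges {e})) :
    ∀ v ∈ G.support, t - n * p ≤ deg G v := by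
  rintro u ⟨v, huv⟩
  linarith [hG s(u, v) huv, condTri_sub_condTri_deleteEdges_le hp hp1 G huv.ne]

lemma rpow_mul_one_div_log_mul {x : ℝ} (hx : 0 < x) (hx1 : x ≠ 1) (y z : ℝ) :
    x ^ (y * (1 / Real.log x * z)) = Real.exp (y * z) := by
  rw [mul_left_comm, one_div, Real.rpow_mul hx.le, Real.rpow_inv_log hx hx1, Real.exp_one_rpow]

lemma eventually_log_one_div_mem_Ioc {l : ℝ} (hl : 0 < l) :
    ∀ᶠ n : ℕ in atTop, Real.log (1 / (l / n)) ∈ Set.Ioc 0 (2 * Real.log n) := by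
  filter_upwards [tendsto_natCast_atTop_atTop.eventually_gt_atTop l,
    tendsto_natCast_atTop_atTop.eventually_gt_atTop (1 / l)] with n hln hln'
  have hn : (0 : ℝ) < n := hl.trans hln
  rw [one_div_div]
  refine ⟨Real.log_pos ((one_lt_div hl).2 hln), ?_⟩
  rw [← Nat.cast_ofNat, ← Real.log_pow, sq, div_eq_mul_one_div]
  gcongr

lemma tendsto_div_mul_log_one_div_atTop {W : ℕ → ℝ} (hW : ∀ n, 0 < W n)
    (h : Tendsto (fun n : ℕ ↦ Real.log n / W n) atTop (nhds 0)) {l c : ℝ} (hl : 0 < l)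
    (hc : 0 < c) :
    Tendsto (fun n : ℕ ↦ W n / (c * Real.log (1 / (l / n)))) atTop atTop := by
  have hpos : ∀ᶠ n : ℕ in atTop, 0 < c * Real.log (1 / (l / n)) / W n :=
    (eventually_log_one_div_mem_Ioc hl).mono fun n hn ↦ div_pos (mul_pos hc hn.1) (hW n)
  have hupper : ∀ᶠ n : ℕ in atTop,
      c * Real.log (1 / (l / n)) / W n ≤ c * 2 * (Real.log n / W n) := by
    filter_upwards [eventually_log_one_div_mem_Ioc hl] with n hn
    rw [← mul_div_assoc, mul_assoc]
    have := hW n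
    gcongr
    exact hn.2
  have hzero : Tendsto (fun n : ℕ ↦ c * Real.log (1 / (l / n)) / W n) atTop (nhds 0) :=
    squeeze_zero' (hpos.mono fun _ ↦ le_of_lt) hupper (by simpa using h.const_mul (c * 2))
  refine (tendsto_nhdsWithin_iff.2 ⟨hzero, hpos⟩).inv_tendsto_nhdsGT_zero.congr fun n ↦ ?_
  rw [Pi.inv_apply, inv_div]

theorem card_filter_le_condTri_sub_le_rpow {n m : ℕ} {p t : ℝ} (hn : n ≠ 0) (hm : 0 < m)
    (hp : 0 < p) (hp1 : p < 1) (ht : 2 * (n * p) ≤ t) :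
    (#{G : SimpleGraph (Fin n) |
        (∀ e ∈ G.edgeSet, t ≤ condTri n p G - condTri n p (G.deleteEdges {e})) ∧
          edgeCount G = m} : ℝ) ≤
      (1 / p) ^ ((m : ℝ) * (1 / Real.log (1 / p) *
        (16 * Real.exp 1 / t * Real.log n + Real.log (16 * Real.exp 1 * m / t ^ 2)))) := by
  have : NeZero n := ⟨hn⟩
  have ht0 : 0 < t := lt_of_lt_of_le (by positivity) ht
  rw [rpow_mul_one_div_log_mul (by positivity) (one_lt_one_div hp hp1).ne']
  calc _ ≤ Real.exp (m * (2 / (t / 2) * Real.log (Fintype.card (Fin n)) +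
          Real.log (Real.exp 1 * m * (2 / (t / 2)) ^ 2))) := by
        refine le_trans ?_ (card_filter_le_deg_and_edgeCount_eq_le_exp hm (half_pos ht0))
        gcongr with G
        exact fun hG v hv ↦ (by linarith : t / 2 ≤ t - n * p).trans
          (sub_le_deg_of_le_condTri_sub hp hp1.le hG v hv)
    _ = Real.exp (m * (4 / t * Real.log n + Real.log (16 * Real.exp 1 * m / t ^ 2))) := by
        rw [Fintype.card_fin, div_div_eq_mul_div]
        ring_nf
    _ ≤ _ := by
        gcongr
        linarith [Real.one_le_exp zero_le_one]

end CoreCounting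

/-- **Bound on the number of `m`-cores.** -/
theorem core_count_bound (l a C : ℝ) (hl : 0 < l) (ha : 0 < a) (hC : 0 < C)
    (k w : ℕ → ℝ) (hk : ∀ n, 0 < k n) (hw : ∀ n, 0 < w n)
    (h0 : Tendsto (fun n : ℕ => Real.log n / ((w n) ^ 2 * (k n) ^ ((1 : ℝ) / 3)))
      atTop (nhds 0)) :
    ∃ C' : ℝ, 0 < C' ∧ ∃ n₀ : ℕ, ∀ n ≥ n₀, ∀ m : ℕ, 1 ≤ m →
      ((Finset.univ.filter (fun G : SimpleGraph (Fin n) =>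
            IsCore n (l / n) a (w n) C (k n) G ∧ edgeCount G = m)).card : ℝ) ≤
        (1 / (l / n)) ^ ((m : ℝ) *
          ((1 / Real.log (1 / (l / n))) *
            ((C' / ((w n) ^ 2 * (k n) ^ ((1 : ℝ) / 3) / (C * a * Real.log (1 / (l / n))))) *
                Real.log n +
              Real.log (C' * m /
                ((w n) ^ 2 * (k n) ^ ((1 : ℝ) / 3) / (C * a * Real.log (1 / (l / n)))) ^ 2)))) := by
  have hW (n : ℕ) : 0 < w n ^ 2 * k n ^ ((1 : ℝ) / 3) :=
    mul_pos (pow_pos (hw n) 2) (Real.rpow_pos_of_pos (hk n) _)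
  have hthreshold := tendsto_div_mul_log_one_div_atTop hW h0 hl (mul_pos hC ha)
  obtain ⟨n₀, hn₀⟩ := eventually_atTop.1
    ((tendsto_natCast_atTop_atTop.eventually_gt_atTop l).and
      (hthreshold.eventually_ge_atTop (2 * l)))
  refine ⟨16 * Real.exp 1, by positivity, n₀, fun n hn m hm ↦ ?_⟩
  obtain ⟨hln, hlt⟩ := hn₀ n hn
  have hn0 : (0 : ℝ) < n := hl.trans hln
  refine le_trans ?_ (card_filter_le_condTri_sub_le_rpow (Nat.cast_pos.1 hn0).ne' hm
    (div_pos hl hn0) ((div_lt_one hn0).2 hln) (by rwa [mul_div_cancel₀ l hn0.ne']))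
  gcongr with G
  exact fun hcore ↦ hcore.2.2
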